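/- Let f ∈ ℂ[x] be a square-free univariate polynomial. Then the annihilator of f^s in D_1[s], namely { P ∈ D_1[s] : P·f^s = 0 in L(f,0) }, is the left ideal generated by the single operator f·∂_x − s·f'. -/

import Mathlib

open Polynomial

noncomputable section

/-- Coefficient-wise application of a derivation `d` on `R` to a polynomial in `s`. -/
def dPoly {R : Type} [CommRing R] [Algebra ℂ R] (d : Derivation ℂ R R)
    (p : Polynomial R) : Polynomial R :=
  p.sum fun i a => Polynomial.C (d a) * Polynomial.X ^ i

/-- An element `a(x,s) ∈ ℂ[x][s]` (inner variable `x`, outer variable `s`), viewed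
as the multiplication operator it induces on `L(f,0) = ℂ[x,f⁻¹,s]·f^s = R[s]`. -/
def mulCoeff {R : Type} [CommRing R] [Algebra (Polynomial ℂ) R]
    (a : Polynomial (Polynomial ℂ)) : Polynomial R :=
  a.sum fun l b => Polynomial.C (algebraMap (Polynomial ℂ) R b) * Polynomial.X ^ l

/-- The action of `∂ₓ` on `L(f,0) = ℂ[x,f⁻¹,s]·f^s`:
`∂ₓ(a f^s) = (a' + s·a·f'/f)·f^s`. -/
def DopX (f : Polynomial ℂ) {R : Type} [CommRing R] [Algebra ℂ R]
    [Algebra (Polynomial ℂ) R] (d : Derivation ℂ R R) (finv : R)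
    (p : Polynomial R) : Polynomial R :=
  dPoly d p
    + Polynomial.X * Polynomial.C (finv * algebraMap (Polynomial ℂ) R (derivative f)) * p

/-- An element of `D_1[s]` in its normal form `∑_k a_k(x,s) ∂ₓ^k`
(`a_k ∈ ℂ[x][s]`) is recorded as a polynomial in `∂ₓ` (the outermost variable)
with coefficients in `ℂ[x][s]`; this is its action on `L(f,0)`. -/
def actD1s (f : Polynomial ℂ) {R : Type} [CommRing R] [Algebra ℂ R]
    [Algebra (Polynomial ℂ) R] (d : Derivation ℂ R R) (finv : R)
    (P : Polynomial (Polynomial (Polynomial ℂ))) (p : Polynomial R) : Polynomial R :=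
  P.sum fun k a => mulCoeff a * (DopX f d finv)^[k] p

/-- Differentiation with respect to `x` on `ℂ[x][s]`. -/
def dX (q : Polynomial (Polynomial ℂ)) : Polynomial (Polynomial ℂ) :=
  q.sum fun l b => Polynomial.C (derivative b) * Polynomial.X ^ l

/-- The faithful action of `D_1[s]` (in normal form) on `ℂ[x][s]`, where `x` acts by
multiplication, `s` by multiplication and `∂ₓ` by differentiation in `x`; two
elements of `D_1[s]` are equal iff they act identically, and the product of two
operators corresponds to the composition of their actions. -/
def rep (P : Polynomial (Polynomial (Polynomial ℂ))) (q : Polynomial (Polynomial ℂ)) :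
    Polynomial (Polynomial ℂ) :=
  P.sum fun k a => a * dX^[k] q

/-!
Over a commutative ring `A` with derivation `δ`, suppose a vector `m` with trivial annihilator in
`A` satisfies `g • ∂m = h • m`. Then `g ^ k • ∂ᵏm = pₖ • m`, where `p₀ = 1` and
`pₖ₊₁ = g δ(pₖ) + (h - k δ(g)) pₖ`. If `∑_{k ≤ n} aₖ ∂ᵏ` kills `m` and `n ≥ 1`, clearing
denominators gives `g ∣ aₙ pₙ`. Modulo `g`, `pₙ` is the product of the `h - k δ(g)` with `k < n`;
if these are nonzerodivisors modulo `g`, then `g ∣ aₙ`, and subtracting `(aₙ / g) ∂ⁿ⁻¹ (g∂ - h)`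
lowers the order. For `m = f^s`, `g = f`, `h = s f'` the factors are `(s - k) f'`, where `f'` is
invertible modulo the square-free `f` and `s - k` is monic in `s`.
-/

section CoeffDerivation

variable {k A : Type*} [CommRing k] [CommRing A] [Algebra k A]

/-- The derivation of `A[X]` that applies `δ` to every coefficient and kills `X`; it is Mathlib's
`Derivation.mapCoeffs` with values moved from `PolynomialModule A A` to `A[X]`. -/
def coeffDerivation (δ : Derivation k A A) : Derivation k A[X] A[X] :=
  PolynomialModule.equivPolynomialSelf.compDer δ.mapCoeffs

@[simp]
lemma coeff_coeffDerivation (δ : Derivation k A A) (p : A[X]) (n : ℕ) :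
    (coeffDerivation δ p).coeff n = δ (p.coeff n) := rfl

@[simp]
lemma coeffDerivation_monomial (δ : Derivation k A A) (n : ℕ) (a : A) :
    coeffDerivation δ (monomial n a) = monomial n (δ a) := by
  ext j
  simp only [coeff_coeffDerivation, coeff_monomial, apply_ite δ, map_zero]

@[simp]
lemma coeffDerivation_C (δ : Derivation k A A) (a : A) :
    coeffDerivation δ (C a) = C (δ a) :=
  coeffDerivation_monomial δ 0 a

lemma coeffDerivation_map {B : Type*} [CommRing B] [Algebra k B] {δ : Derivation k A A}
    {d : Derivation k B B} {φ : A →+* B} (hφ : ∀ a, d (φ a) = φ (δ a)) (p : A[X]) :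
    coeffDerivation d (p.map φ) = (coeffDerivation δ p).map φ := by
  ext n
  simp only [coeff_coeffDerivation, coeff_map, hφ]

lemma iterate_derivation_pow {δ : Derivation k A A} {t : A} (ht : δ t = 1) (j n : ℕ) :
    δ^[j] (t ^ n) = n.descFactorial j • t ^ (n - j) := by
  induction j with
  | zero => simp
  | succ j ih =>
    rw [Function.iterate_succ_apply', ih, map_nsmul, Derivation.leibniz_pow, ht, smul_eq_mul,
      mul_one, smul_smul, mul_comm, ← Nat.descFactorial_succ, Nat.sub_sub]

end CoeffDerivation

lemma C_dvd_of_C_dvd_mul_monic {A : Type*} [CommRing A] {r : A} {p q : A[X]} (hq : q.Monic)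
    (h : C r ∣ p * q) : C r ∣ p := by
  have C_dvd_iff (u : A[X]) : C r ∣ u ↔ u.map (Ideal.Quotient.mk (Ideal.span {r})) = 0 := by
    simp only [C_dvd_iff_dvd_coeff, Polynomial.ext_iff, coeff_map, coeff_zero,
      Ideal.Quotient.eq_zero_iff_mem, Ideal.mem_span_singleton]
  rw [C_dvd_iff, Polynomial.map_mul] at h
  exact (C_dvd_iff p).mpr ((hq.map _).mul_left_eq_zero_iff.mp h)

section OreExtension

variable {k A M N : Type*} [CommRing k] [CommRing A] [Algebra k A]
  [AddCommGroup M] [Module A M] [AddCommGroup N] [Module A N]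

/-- `T` is a connection along `δ`: it is additive and satisfies the Leibniz rule over `δ`. Such a
`T` is the action of `∂` in a left module over the Ore extension `A[∂; δ]`, in which
`∂ a = a ∂ + δ a`. -/
structure IsConnection (δ : Derivation k A A) (T : M → M) : Prop where
  apply_add : ∀ x y, T (x + y) = T x + T y
  apply_smul : ∀ (a : A) x, T (a • x) = δ a • x + a • T x

/-- The value at `m` of the operator with normal form `P = ∑ aⱼ ∂ʲ`, where `∂` acts by `T`. As in
`rep`, normal forms are polynomials in `∂` with coefficients on the left. -/
def oreEval (T : M → M) (m : M) : A[X] →ₗ[A] M :=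
  lsum fun j => LinearMap.toSpanSingleton A M (T^[j] m)

/-- Left multiplication by `∂` on normal forms in `A[∂; δ]`. -/
def oreD (δ : Derivation k A A) (P : A[X]) : A[X] :=
  P * X + coeffDerivation δ P

/-- The product in `A[∂; δ]` of two normal forms: `Q` acts on the left module `A[∂; δ]`. -/
def oreMul (δ : Derivation k A A) (Q G : A[X]) : A[X] :=
  oreEval (oreD δ) G Q

variable {δ : Derivation k A A} {T : M → M}

lemma isConnection_derivation (δ : Derivation k A A) : IsConnection δ δ where
  apply_add := map_add δ
  apply_smul a x := by
    simp only [smul_eq_mul, Derivation.leibniz]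
    ring

lemma isConnection_add_mul {B : Type*} [CommRing B] [Algebra k B] [Algebra A B]
    {D : Derivation k B B} (hD : ∀ a, D (algebraMap A B a) = algebraMap A B (δ a)) (u : B) :
    IsConnection δ fun b : B => D b + u * b where
  apply_add x y := by
    rw [map_add]
    ring
  apply_smul a x := by
    simp only [Algebra.smul_def, Derivation.leibniz, hD, Algebra.algebraMap_self_apply]
    ring

lemma isConnection_oreD (δ : Derivation k A A) : IsConnection δ (oreD δ) where
  apply_add P Q := by
    simp only [oreD, map_add]
    ring
  apply_smul a P := by
    simp only [oreD, smul_eq_C_mul, Derivation.leibniz, coeffDerivation_C, smul_eq_mul]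
    ring

lemma IsConnection.apply_zero (hT : IsConnection δ T) : T 0 = 0 := by
  simpa using hT.apply_add 0 0

lemma oreEval_apply (T : M → M) (m : M) (P : A[X]) :
    oreEval T m P = P.sum fun j a => a • T^[j] m := rfl

lemma oreEval_monomial (T : M → M) (m : M) (j : ℕ) (a : A) :
    oreEval T m (monomial j a) = a • T^[j] m :=
  sum_monomial_index a _ (zero_smul A _)

lemma oreEval_C_mul_X_sub_C (T : M → M) (m : M) (g h : A) :
    oreEval T m (C g * X - C h) = g • T m - h • m := by
  rw [map_sub, C_mul_X_eq_monomial, ← monomial_zero_left, oreEval_monomial, oreEval_monomial,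
    Function.iterate_one, Function.iterate_zero_apply]

lemma oreEval_eq_sum_range (T : M → M) (m : M) {P : A[X]} {n : ℕ} (hP : P.natDegree ≤ n) :
    oreEval T m P = ∑ j ∈ Finset.range (n + 1), P.coeff j • T^[j] m :=
  P.sum_over_range' (f := fun j a => a • T^[j] m) (fun _ => zero_smul A _) (n + 1)
    (Nat.lt_succ_of_le hP)

lemma IsConnection.oreEval_zero (hT : IsConnection δ T) (P : A[X]) : oreEval T 0 P = 0 := by
  simp only [oreEval_apply, Function.iterate_fixed hT.apply_zero, smul_zero, sum_def,
    Finset.sum_const_zero]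

lemma map_oreEval {T' : N → N} (φ : M →ₗ[A] N) (hφ : Function.Semiconj φ T T') (m : M)
    (P : A[X]) : φ (oreEval T m P) = oreEval T' (φ m) P := by
  simp only [oreEval_apply, sum_def, map_sum, map_smul, (hφ.iterate_right _).eq]

lemma IsConnection.oreEval_oreD (hT : IsConnection δ T) (m : M) (P : A[X]) :
    oreEval T m (oreD δ P) = T (oreEval T m P) := by
  induction P using Polynomial.induction_on' with
  | add P Q hP hQ => rw [(isConnection_oreD δ).apply_add, map_add, map_add, hP, hQ, hT.apply_add]
  | monomial j a =>
    rw [oreD, monomial_mul_X, coeffDerivation_monomial, map_add, oreEval_monomial,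
      oreEval_monomial, oreEval_monomial, hT.apply_smul, Function.iterate_succ_apply', add_comm]

lemma IsConnection.oreEval_oreMul (hT : IsConnection δ T) (m : M) (Q G : A[X]) :
    oreEval T m (oreMul δ Q G) = oreEval T (oreEval T m G) Q :=
  map_oreEval (oreEval T m) (hT.oreEval_oreD m) G Q

lemma natDegree_oreD_le {P : A[X]} {n : ℕ} (hP : P.natDegree ≤ n) :
    (oreD δ P).natDegree ≤ n + 1 := by
  rw [natDegree_le_iff_coeff_eq_zero] at hP ⊢
  rintro (_ | j) hj
  · omega
  · rw [oreD, coeff_add, coeff_mul_X, coeff_coeffDerivation, hP j (by omega), hP (j + 1) (by omega),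
      map_zero, add_zero]

lemma coeff_oreD_succ {P : A[X]} {n : ℕ} (hP : P.natDegree ≤ n) :
    (oreD δ P).coeff (n + 1) = P.coeff n := by
  rw [oreD, coeff_add, coeff_mul_X, coeff_coeffDerivation,
    coeff_eq_zero_of_natDegree_lt (Nat.lt_succ_of_le hP), map_zero, add_zero]

lemma natDegree_iterate_oreD_le {P : A[X]} {n : ℕ} (hP : P.natDegree ≤ n) (j : ℕ) :
    ((oreD δ)^[j] P).natDegree ≤ n + j := by
  induction j with
  | zero => exact hP
  | succ j ih =>
    rw [Function.iterate_succ_apply']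
    exact natDegree_oreD_le ih

lemma coeff_iterate_oreD {P : A[X]} {n : ℕ} (hP : P.natDegree ≤ n) (j : ℕ) :
    ((oreD δ)^[j] P).coeff (n + j) = P.coeff n := by
  induction j with
  | zero => rfl
  | succ j ih =>
    rw [Function.iterate_succ_apply', ← add_assoc,
      coeff_oreD_succ (natDegree_iterate_oreD_le hP j), ih]

end OreExtension

section Faithful

variable {k A : Type*} [CommRing k] [CommRing A] [Algebra k A] {δ : Derivation k A A} {t : A}

open scoped Nat in
lemma oreEval_pow_natTrailingDegree (ht : δ t = 1) (P : A[X]) :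
    oreEval δ (t ^ P.natTrailingDegree) P = P.natTrailingDegree ! • P.trailingCoeff := by
  simp only [oreEval_apply, sum_def, iterate_derivation_pow ht]
  rw [Finset.sum_eq_single P.natTrailingDegree]
  · simp [trailingCoeff, Nat.descFactorial_self, mul_comm]
  · intro j hj hne
    have hlt : P.natTrailingDegree < j := (natTrailingDegree_le_of_mem_supp j hj).lt_of_ne' hne
    rw [Nat.descFactorial_of_lt hlt, zero_smul, smul_zero]
  · intro hP
    rw [notMem_support_iff.mp hP, zero_smul]

lemma eq_zero_of_forall_oreEval_eq_zero [IsAddTorsionFree A] (ht : δ t = 1) {P : A[X]}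
    (hP : ∀ q, oreEval δ q P = 0) : P = 0 := by
  have htrailing := oreEval_pow_natTrailingDegree ht P
  rw [hP, eq_comm, nsmul_eq_zero_iff_right (Nat.factorial_ne_zero _)] at htrailing
  exact trailingCoeff_eq_zero.mp htrailing

lemma forall_oreEval_eq_comp_iff [IsAddTorsionFree A] (ht : δ t = 1) {P Q G : A[X]} :
    (∀ q, oreEval δ q P = oreEval δ (oreEval δ q G) Q) ↔ P = oreMul δ Q G := by
  simp only [← (isConnection_derivation δ).oreEval_oreMul]
  refine ⟨fun h => sub_eq_zero.mp (eq_zero_of_forall_oreEval_eq_zero ht fun q => ?_), fun h q => ?_⟩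
  · rw [map_sub, h q, sub_self]
  · rw [h]

end Faithful

section FirstOrderAnnihilator

variable {k A M : Type*} [CommRing k] [CommRing A] [Algebra k A] [AddCommGroup M] [Module A M]
  {δ : Derivation k A A} {T : M → M} {g h : A} {m : M}

/-- The numerators `pⱼ` of the iterated derivatives of a solution of `g • T m = h • m`, so that
`g ^ j • T^[j] m = pⱼ • m`. -/
def derivNumerator (δ : Derivation k A A) (g h : A) : ℕ → A
  | 0 => 1
  | j + 1 => g * δ (derivNumerator δ g h j) + (h - j * δ g) * derivNumerator δ g h j

lemma mul_derivation_pow (δ : Derivation k A A) (g : A) (n : ℕ) :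
    g * δ (g ^ n) = n * δ g * g ^ n := by
  cases n with
  | zero => simp
  | succ n =>
    rw [Derivation.leibniz_pow, Nat.add_sub_cancel, smul_eq_mul, nsmul_eq_mul]
    ring

lemma IsConnection.pow_smul_iterate (hT : IsConnection δ T) (hm : g • T m = h • m) (j : ℕ) :
    g ^ j • T^[j] m = derivNumerator δ g h j • m := by
  induction j with
  | zero => simp [derivNumerator]
  | succ j ih =>
    set p := derivNumerator δ g h j
    have hleibniz : δ (g ^ j) • T^[j] m + g ^ j • T^[j + 1] m = δ p • m + p • T m := by
      rw [Function.iterate_succ_apply', ← hT.apply_smul, ← hT.apply_smul, ih]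
    calc g ^ (j + 1) • T^[j + 1] m
        = g • (δ (g ^ j) • T^[j] m + g ^ j • T^[j + 1] m) - (g * δ (g ^ j)) • T^[j] m := by
          module
      _ = (g * δ p) • m + p • g • T m - (j * δ g) • g ^ j • T^[j] m := by
          rw [hleibniz, mul_derivation_pow]
          module
      _ = (g * δ p + (h - j * δ g) * p) • m := by
          rw [hm, ih]
          module

lemma dvd_of_dvd_mul_derivNumerator (hreg : ∀ (j : ℕ) (a : A), g ∣ a * (h - j * δ g) → g ∣ a)
    (j : ℕ) {a : A} (ha : g ∣ a * derivNumerator δ g h j) : g ∣ a := by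
  induction j generalizing a with
  | zero => simpa [derivNumerator] using ha
  | succ j ih =>
    refine hreg j a (ih ?_)
    rw [derivNumerator, mul_add, mul_left_comm, ← mul_assoc a (h - _)] at ha
    exact (dvd_add_right (dvd_mul_right g _)).mp ha

lemma IsConnection.pow_smul_oreEval (hT : IsConnection δ T) (hm : g • T m = h • m) {P : A[X]}
    {n : ℕ} (hP : P.natDegree ≤ n) :
    g ^ n • oreEval T m P =
      (∑ j ∈ Finset.range (n + 1), P.coeff j * g ^ (n - j) * derivNumerator δ g h j) • m := by
  rw [oreEval_eq_sum_range T m hP, Finset.smul_sum, Finset.sum_smul]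
  refine Finset.sum_congr rfl fun j hj => ?_
  rw [mul_smul, ← hT.pow_smul_iterate hm,
    ← Nat.sub_add_cancel (Nat.le_of_lt_succ (Finset.mem_range.mp hj)), pow_add,
    Nat.add_sub_cancel]
  module

lemma IsConnection.dvd_coeff_of_oreEval_eq_zero (hT : IsConnection δ T) (hm : g • T m = h • m)
    (hm0 : ∀ a : A, a • m = 0 → a = 0)
    (hreg : ∀ (j : ℕ) (a : A), g ∣ a * (h - j * δ g) → g ∣ a)
    {P : A[X]} {n : ℕ} (hdeg : P.natDegree ≤ n + 1) (hP : oreEval T m P = 0) :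
    g ∣ P.coeff (n + 1) := by
  have hsum := hT.pow_smul_oreEval hm hdeg
  rw [hP, smul_zero] at hsum
  have hzero := hm0 _ hsum.symm
  rw [Finset.sum_range_succ, Nat.sub_self, pow_zero, mul_one] at hzero
  refine dvd_of_dvd_mul_derivNumerator hreg (n + 1) ((dvd_add_right ?_).mp (hzero ▸ dvd_zero g))
  refine Finset.dvd_sum fun j hj => ?_
  have hpos : n + 1 - j ≠ 0 := Nat.sub_ne_zero_of_lt (Finset.mem_range.mp hj)
  exact ((dvd_pow_self g hpos).mul_left _).mul_right _

lemma natDegree_sub_oreMul_monomial_le {P G : A[X]} {n : ℕ} {b : A} (hP : P.natDegree ≤ n + 1)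
    (hG : G.natDegree ≤ 1) (hb : P.coeff (n + 1) = G.coeff 1 * b) :
    (P - oreMul δ (monomial n b) G).natDegree ≤ n := by
  rw [oreMul, oreEval_monomial, natDegree_le_iff_coeff_eq_zero]
  intro j hj
  rw [coeff_sub, coeff_smul, smul_eq_mul]
  obtain rfl | hlt := (Nat.succ_le_of_lt hj).eq_or_lt
  · rw [Nat.succ_eq_add_one, add_comm n, coeff_iterate_oreD hG, add_comm 1, hb, mul_comm, sub_self]
  · rw [coeff_eq_zero_of_natDegree_lt (hP.trans_lt hlt), coeff_eq_zero_of_natDegree_lt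
      ((natDegree_iterate_oreD_le hG n).trans_lt (by omega)), mul_zero, sub_zero]

lemma IsConnection.oreEval_oreMul_eq_zero (hT : IsConnection δ T) {G : A[X]}
    (hG : oreEval T m G = 0) (Q : A[X]) : oreEval T m (oreMul δ Q G) = 0 := by
  rw [hT.oreEval_oreMul, hG, hT.oreEval_zero]

lemma IsConnection.exists_eq_oreMul (hT : IsConnection δ T) (hm : g • T m = h • m)
    (hm0 : ∀ a : A, a • m = 0 → a = 0)
    (hreg : ∀ (j : ℕ) (a : A), g ∣ a * (h - j * δ g) → g ∣ a)
    {P : A[X]} (hP : oreEval T m P = 0) : ∃ Q, P = oreMul δ Q (C g * X - C h) := by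
  set G : A[X] := C g * X - C h with hG
  have hGm : oreEval T m G = 0 := by rw [hG, oreEval_C_mul_X_sub_C, hm, sub_self]
  have hGdeg : G.natDegree ≤ 1 := by
    rw [hG]
    compute_degree
  have hGcoeff : G.coeff 1 = g := by simp [hG, coeff_C]
  obtain ⟨n, hn⟩ : ∃ n, P.natDegree ≤ n := ⟨_, le_rfl⟩
  induction n generalizing P with
  | zero =>
    obtain ⟨a, rfl⟩ : ∃ a, C a = P := ⟨_, (eq_C_of_natDegree_le_zero hn).symm⟩
    rw [← monomial_zero_left, oreEval_monomial] at hP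
    refine ⟨0, ?_⟩
    rw [hm0 a hP, C_0, oreMul, map_zero]
  | succ n ih =>
    obtain ⟨b, hb⟩ := hT.dvd_coeff_of_oreEval_eq_zero hm hm0 hreg hn hP
    obtain ⟨Q, hQ⟩ := ih (P := P - oreMul δ (monomial n b) G)
      (by rw [map_sub, hP, hT.oreEval_oreMul_eq_zero hGm, sub_self])
      (natDegree_sub_oreMul_monomial_le hn hGdeg (by rw [hGcoeff, hb]))
    refine ⟨Q + monomial n b, ?_⟩
    rw [oreMul, map_add]
    exact sub_eq_iff_eq_add.mp hQ

theorem IsConnection.oreEval_eq_zero_iff_exists_eq_oreMul (hT : IsConnection δ T)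
    (hm : g • T m = h • m) (hm0 : ∀ a : A, a • m = 0 → a = 0)
    (hreg : ∀ (j : ℕ) (a : A), g ∣ a * (h - j * δ g) → g ∣ a) {P : A[X]} :
    oreEval T m P = 0 ↔ ∃ Q, P = oreMul δ Q (C g * X - C h) := by
  refine ⟨hT.exists_eq_oreMul hm hm0 hreg, ?_⟩
  rintro ⟨Q, rfl⟩
  exact hT.oreEval_oreMul_eq_zero (by rw [oreEval_C_mul_X_sub_C, hm, sub_self]) Q

end FirstOrderAnnihilator

section PowerAnnihilator

variable {k A B : Type*} [CommRing k] [CommRing A] [Algebra k A] {δ : Derivation k A A} {f : A}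
  [CommRing B] [Algebra k B]

/-- The action of `∂` on `B[s] · f^s`, where `u = f' / f`: it sends `p · f^s` to
`(p' + s u p) · f^s`. -/
def powerConnection (d : Derivation k B B) (u : B) (p : B[X]) : B[X] :=
  coeffDerivation d p + X * C u * p

lemma C_dvd_of_C_dvd_mul_X_mul_C_sub (hf : IsCoprime f (δ f)) (j : ℕ) (a : A[X])
    (ha : C f ∣ a * (X * C (δ f) - (j : A[X]) * coeffDerivation δ (C f))) : C f ∣ a := by
  have hfactor : a * (X * C (δ f) - (j : A[X]) * coeffDerivation δ (C f)) =
      a * (X - C (j : A)) * C (δ f) := by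
    rw [coeffDerivation_C, map_natCast]
    ring
  rw [hfactor] at ha
  exact C_dvd_of_C_dvd_mul_monic (monic_X_sub_C _) ((hf.map C).dvd_of_dvd_mul_right ha)

variable [Algebra A B]

-- Only local, since it would form a diamond with `Algebra.id` if `B` were `A`.
attribute [local instance] Polynomial.algebra

lemma isConnection_powerConnection {d : Derivation k B B}
    (hd : ∀ a, d (algebraMap A B a) = algebraMap A B (δ a)) (u : B) :
    IsConnection (coeffDerivation δ) (powerConnection d u) :=
  isConnection_add_mul (coeffDerivation_map hd) (X * C u)

lemma C_smul_powerConnection_one (d : Derivation k B B) {u : B}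
    (hu : algebraMap A B f * u = algebraMap A B (δ f)) :
    C f • powerConnection d u 1 = (X * C (δ f)) • (1 : B[X]) := by
  simp only [powerConnection, Derivation.map_one_eq_zero, Algebra.smul_def, algebraMap_def,
    coe_mapRingHom, Polynomial.map_mul, map_C, map_X, ← hu, C_mul]
  ring

lemma eq_zero_of_smul_one_eq_zero (hinj : Function.Injective (algebraMap A B)) (a : A[X])
    (ha : a • (1 : B[X]) = 0) : a = 0 := by
  rw [← Algebra.algebraMap_eq_smul_one] at ha
  exact (map_eq_zero_iff _ (map_injective _ hinj)).mp ha

theorem oreEval_powerConnection_one_eq_zero_iff (hf : IsCoprime f (δ f))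
    (hinj : Function.Injective (algebraMap A B)) {d : Derivation k B B}
    (hd : ∀ a, d (algebraMap A B a) = algebraMap A B (δ a)) {u : B}
    (hu : algebraMap A B f * u = algebraMap A B (δ f)) {P : A[X][X]} :
    oreEval (powerConnection d u) (1 : B[X]) P = 0 ↔
      ∃ Q, P = oreMul (coeffDerivation δ) Q (C (C f) * X - C (X * C (δ f))) :=
  (isConnection_powerConnection hd u).oreEval_eq_zero_iff_exists_eq_oreMul
    (C_smul_powerConnection_one d hu) (eq_zero_of_smul_one_eq_zero hinj)
    (C_dvd_of_C_dvd_mul_X_mul_C_sub hf)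

end PowerAnnihilator

section WeylAlgebra

lemma dPoly_eq_coeffDerivation {R : Type} [CommRing R] [Algebra ℂ R] (d : Derivation ℂ R R) :
    dPoly d = coeffDerivation d := by
  ext p n
  simp +contextual [dPoly, sum_def]

lemma dX_eq_coeffDerivation : dX = coeffDerivation (derivative' (R := ℂ)) :=
  dPoly_eq_coeffDerivation derivative'

lemma rep_eq_oreEval (P : ℂ[X][X][X]) (q : ℂ[X][X]) :
    rep P q = oreEval (coeffDerivation derivative') q P := by
  rw [← dX_eq_coeffDerivation]
  rfl

lemma forall_rep_eq_rep_rep_iff {P Q G : ℂ[X][X][X]} :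
    (∀ q, rep P q = rep Q (rep G q)) ↔ P = oreMul (coeffDerivation derivative') Q G := by
  have hx : coeffDerivation (derivative' (R := ℂ)) (C X) = 1 := by simp
  simp only [rep_eq_oreEval, forall_oreEval_eq_comp_iff hx]

variable {R : Type} [CommRing R] [Algebra ℂ[X] R]

attribute [local instance] Polynomial.algebra

lemma mulCoeff_eq_algebraMap (a : ℂ[X][X]) : mulCoeff a = algebraMap ℂ[X][X] R[X] a := by
  rw [algebraMap_def, coe_mapRingHom, Polynomial.map, eval₂_eq_sum]
  rfl

variable [Algebra ℂ R]

lemma DopX_eq_powerConnection (f : ℂ[X]) (d : Derivation ℂ R R) (finv : R) :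
    DopX f d finv = powerConnection d (finv * algebraMap ℂ[X] R (derivative f)) := by
  ext1 p
  rw [DopX, dPoly_eq_coeffDerivation, powerConnection]

lemma actD1s_eq_oreEval (f : ℂ[X]) (d : Derivation ℂ R R) (finv : R) (P : ℂ[X][X][X])
    (p : R[X]) : actD1s f d finv P p =
      oreEval (powerConnection d (finv * algebraMap ℂ[X] R (derivative f))) p P := by
  simp only [actD1s, oreEval_apply, mulCoeff_eq_algebraMap, Algebra.smul_def,
    DopX_eq_powerConnection]

lemma actD1s_one_eq_zero_iff {f : ℂ[X]} (hf : Squarefree f)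
    (hinj : Function.Injective (algebraMap ℂ[X] R)) {d : Derivation ℂ R R}
    (hd : ∀ p, d (algebraMap ℂ[X] R p) = algebraMap ℂ[X] R (derivative p)) {finv : R}
    (hfinv : algebraMap ℂ[X] R f * finv = 1) {P : ℂ[X][X][X]} :
    actD1s f d finv P 1 = 0 ↔ ∃ Q, P = oreMul (coeffDerivation derivative') Q
      (C (C f) * X - C (X * C (derivative f))) := by
  have hcoprime : IsCoprime f (derivative' f) := PerfectField.separable_iff_squarefree.mpr hf
  rw [actD1s_eq_oreEval]
  exact oreEval_powerConnection_one_eq_zero_iff hcoprime hinj hd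
    (by rw [← mul_assoc, hfinv, one_mul, derivative'_apply])

end WeylAlgebra

theorem stmt11_general (f : ℂ[X]) (hsf : Squarefree f)
    (R : Type) [CommRing R] [Algebra ℂ R] [Algebra ℂ[X] R]
    (hinj : Function.Injective (algebraMap ℂ[X] R))
    (d : Derivation ℂ R R)
    (hd : ∀ p, d (algebraMap ℂ[X] R p) = algebraMap ℂ[X] R (derivative p))
    (finv : R) (hfinv : algebraMap ℂ[X] R f * finv = 1)
    (G : ℂ[X][X][X]) (hG : G = C (C f) * X - C (X * C (derivative f))) (P : ℂ[X][X][X]) :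
    actD1s f d finv P (1 : R[X]) = 0 ↔ ∃ Q, ∀ q, rep P q = rep Q (rep G q) := by
  simp only [forall_rep_eq_rep_rep_iff, hG, actD1s_one_eq_zero_iff hsf hinj hd hfinv]

/-- Let `f ∈ ℂ[x]` be square-free.  The annihilator of `f^s` in
`D_1[s]`, i.e. `{ P ∈ D_1[s] : P·f^s = 0 in L(f,0) }`, is the left ideal generated by
the single operator `f·∂ₓ − s·f'`: an operator `P` annihilates `f^s` iff `P = Q·(f∂ₓ − s f')`
for some `Q ∈ D_1[s]` (equality of operators being read off in the faithful
representation `rep` of `D_1[s]` on `ℂ[x,s]`). -/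
theorem stmt11 (f : Polynomial ℂ) (hsf : Squarefree f)
    (R : Type) [CommRing R] [Algebra ℂ R] [Algebra (Polynomial ℂ) R]
    [IsScalarTower ℂ (Polynomial ℂ) R]
    [IsLocalization.Away f R]
    (d : Derivation ℂ R R)
    (hd : ∀ p, d (algebraMap (Polynomial ℂ) R p) = algebraMap (Polynomial ℂ) R (derivative p))
    (finv : R) (hfinv : algebraMap (Polynomial ℂ) R f * finv = 1)
    (G : Polynomial (Polynomial (Polynomial ℂ)))
    (hG : G = Polynomial.C (Polynomial.C f) * Polynomial.X
      - Polynomial.C (Polynomial.X * Polynomial.C (derivative f))) :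
    ∀ P : Polynomial (Polynomial (Polynomial ℂ)),
      actD1s f d finv P (1 : Polynomial R) = 0 ↔
      ∃ Q : Polynomial (Polynomial (Polynomial ℂ)),
        ∀ q : Polynomial (Polynomial ℂ), rep P q = rep Q (rep G q) := by
  have hinj : Function.Injective (algebraMap (Polynomial ℂ) R) :=
    IsLocalization.injective R (powers_le_nonZeroDivisors_of_noZeroDivisors hsf.ne_zero)
  exact stmt11_general f hsf R hinj d hd finv hfinv G hG

end
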